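/- Let τ > 0 and f ∈ L¹(ℝ,ℂ). Then the following are equivalent: (i) f̂ is a smooth function with compact support and dist(supp f̂, {0, τ}) > 0; (ii) there exist g, h ∈ L¹(ℝ,ℂ) with f = g ∗ h, such that ĝ is smooth with compact support and dist(supp ĝ, {0}) > 0, and ĥ is smooth with compact support and dist(supp ĥ, {τ}) > 0. (This is the identity H¹_{{0,τ},0} = H¹_{00} ∗ H¹_{τ0}.) -/

import Mathlib

/-!
For integrable functions the Fourier transform turns convolution into multiplication, so the
convolution of `g` and `h` has transform `FT g * FT h`, which is smooth and whose support lies in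
those of both factors; this gives the backward implication.

Conversely, take `g = f` and let `h` be the Schwartz function whose transform is a smooth cutoff
equal to `1` on `tsupport (FT f)` and supported in a compact set that misses `τ`
(`exists_FT_cutoff`). Then `f` and the convolution of `f` and `h` have the same Fourier transform,
and they agree almost everywhere because the Fourier transform is injective on `L¹`
(`ae_eq_of_FT_eq`).

`FT` is related to Mathlib's `𝓕`, which has the kernel `e^{-2πixξ}`, by rescaling the frequency.
-/

open MeasureTheory Complex

/-- The Fourier transform of an integrable function `f : ℝ → ℂ`:
`f̂(ξ) = ∫ f(x) e^{-iξx} dx`. -/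
noncomputable def FT (f : ℝ → ℂ) (ξ : ℝ) : ℂ :=
  ∫ x : ℝ, f x * Complex.exp (-Complex.I * ξ * x)

open scoped FourierTransform SchwartzMap ContDiff

lemma FT_two_pi_mul (f : ℝ → ℂ) (w : ℝ) : FT f (2 * Real.pi * w) = 𝓕 f w := by
  rw [Real.fourier_real_eq_integral_exp_smul, FT]
  congr 1 with x
  rw [smul_eq_mul, mul_comm]
  congr 2
  push_cast
  ring

lemma FT_eq_fourier (f : ℝ → ℂ) (ξ : ℝ) : FT f ξ = 𝓕 f (ξ / (2 * Real.pi)) := by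
  rw [← FT_two_pi_mul]
  congr 1
  have := Real.pi_pos
  field_simp

lemma integrable_conv {g h : ℝ → ℂ} (hg : Integrable g) (hh : Integrable h) :
    Integrable (fun x => ∫ y : ℝ, g (x - y) * h y) := by
  refine (hg.integrable_convolution (ContinuousLinearMap.mul ℂ ℂ) hh).congr (.of_forall fun x => ?_)
  exact convolution_mul_swap

lemma FT_conv {g h : ℝ → ℂ} (hg : Integrable g) (hh : Integrable h) :
    FT (fun x => ∫ y : ℝ, g (x - y) * h y) = FT g * FT h := by
  have e : (fun x => ∫ y : ℝ, g (x - y) * h y) =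
      convolution g h (ContinuousLinearMap.mul ℂ ℂ) volume := by
    ext x
    exact convolution_mul_swap.symm
  ext ξ
  rw [Pi.mul_apply, e]
  simp only [FT_eq_fourier]
  exact Real.fourier_mul_convolution_eq hg hh _

lemma FT_congr_ae {f g : ℝ → ℂ} (h : f =ᵐ[volume] g) : FT f = FT g := by
  ext ξ
  refine integral_congr_ae ?_
  filter_upwards [h] with x hx
  rw [hx]

/-- Injectivity of the Fourier transform on `L¹`: a test function is the transform of a Schwartz
function `s`, and `∫ 𝓕 s * f = ∫ s * 𝓕 f` depends only on the transform of `f`. -/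
lemma ae_eq_of_FT_eq {f g : ℝ → ℂ} (hf : Integrable f) (hg : Integrable g) (h : FT f = FT g) :
    f =ᵐ[volume] g := by
  refine ae_eq_of_integral_contDiff_smul_eq hf.locallyIntegrable hg.locallyIntegrable ?_
  intro φ hφ hφc
  have hc : HasCompactSupport (fun x => (φ x : ℂ)) := hφc.comp_left Complex.ofReal_zero
  have hd : ContDiff ℝ ∞ (fun x => (φ x : ℂ)) := Complex.ofRealCLM.contDiff.comp hφ
  let S : 𝓢(ℝ, ℂ) := hc.toSchwartzMap hd
  have hS : 𝓕 ((𝓕⁻ S : 𝓢(ℝ, ℂ)) : ℝ → ℂ) = fun x => (φ x : ℂ) := by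
    rw [← SchwartzMap.fourier_coe,
      FourierTransform.fourier_fourierInv_eq]
    rfl
  have key : ∀ u : ℝ → ℂ, Integrable u →
      ∫ x, φ x • u x = ∫ x, (𝓕⁻ S : 𝓢(ℝ, ℂ)) x • FT u (2 * Real.pi * x) := by
    intro u hu
    have := VectorFourier.integral_fourierIntegral_smul_eq_flip (L := innerₗ ℝ)
      Real.continuous_fourierChar continuous_inner (𝓕⁻ S : 𝓢(ℝ, ℂ)).integrable (μ := volume) hu
    rw [flip_innerₗ] at this
    simp only [FT_two_pi_mul]
    refine Eq.trans ?_ this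
    congr 1 with x
    rw [show VectorFourier.fourierIntegral Real.fourierChar volume (innerₗ ℝ)
      (𝓕⁻ S : 𝓢(ℝ, ℂ)) x = φ x from congrFun hS x]
    simp
  rw [key f hf, key g hg, h]

/-- Every compact set `K` missing `τ` admits an integrable function whose Fourier transform is a
smooth cutoff equal to `1` on `K`, with compact support missing `τ`. -/
lemma exists_FT_cutoff {K : Set ℝ} (hK : IsCompact K) {τ : ℝ} (hτ : τ ∉ K) :
    ∃ h : ℝ → ℂ, Integrable h ∧ ContDiff ℝ ∞ (FT h) ∧ HasCompactSupport (FT h) ∧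
      τ ∉ tsupport (FT h) ∧ ∀ ξ ∈ K, FT h ξ = 1 := by
  obtain ⟨L, hL, hKL, hLτ⟩ := exists_compact_between hK
    (isClosed_singleton (x := τ)).isOpen_compl (Set.subset_compl_singleton_iff.2 hτ)
  obtain ⟨χ, hχ1, hχ0, -⟩ := exists_contMDiffMap_one_nhds_of_subset_interior
    (n := ⊤) (modelWithCornersSelf ℝ ℝ) hK.isClosed hKL
  have hχd : ContDiff ℝ ∞ (fun x => (χ x : ℂ)) :=
    Complex.ofRealCLM.contDiff.comp χ.contMDiff.contDiff
  have hsub : tsupport (fun x => (χ x : ℂ)) ⊆ L := by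
    refine closure_minimal (fun x hx => ?_) hL.isClosed
    by_contra hxL
    exact hx (by simp [hχ0 x hxL])
  have hχc : HasCompactSupport (fun x => (χ x : ℂ)) :=
    hL.of_isClosed_subset (isClosed_tsupport _) hsub
  have hpi : 2 * Real.pi ≠ 0 := by positivity
  -- The rescaling turns Mathlib's normalisation of the Fourier transform into that of `FT`.
  have hc : HasCompactSupport (fun x : ℝ => (χ (2 * Real.pi * x) : ℂ)) :=
    hχc.comp_homeomorph (Homeomorph.mulLeft₀ (2 * Real.pi) hpi)
  have hd : ContDiff ℝ ∞ (fun x : ℝ => (χ (2 * Real.pi * x) : ℂ)) :=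
    hχd.comp (contDiff_const.mul contDiff_id)
  let S : 𝓢(ℝ, ℂ) := hc.toSchwartzMap hd
  have hS : FT (𝓕⁻ S : 𝓢(ℝ, ℂ)) = fun x => (χ x : ℂ) := by
    ext ξ
    rw [FT_eq_fourier, ← SchwartzMap.fourier_coe, FourierTransform.fourier_fourierInv_eq]
    change (χ (2 * Real.pi * (ξ / (2 * Real.pi))) : ℂ) = χ ξ
    rw [mul_div_cancel₀ _ hpi]
  refine ⟨(𝓕⁻ S : 𝓢(ℝ, ℂ)), (𝓕⁻ S : 𝓢(ℝ, ℂ)).integrable, ?_⟩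
  rw [hS]
  refine ⟨hχd, hχc, fun h => hLτ (hsub h) rfl, fun ξ hξ => ?_⟩
  simp [hχ1.self_of_nhdsSet ξ hξ]

/-- **The identity `H¹_{{0,τ},0} = H¹_{00} ∗ H¹_{τ0}`:** an `L¹`-function has Fourier
transform smooth, compactly supported and avoiding `{0, τ}` iff it is the convolution of an
`L¹`-function whose Fourier transform is smooth, compactly supported and avoids `0` with one
whose Fourier transform is smooth, compactly supported and avoids `τ`. -/
theorem H1_0tau0_eq_convolution (τ : ℝ) (hτ : 0 < τ) (f : ℝ → ℂ) (hf : Integrable f) :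
    (ContDiff ℝ (⊤ : ℕ∞) (FT f) ∧ HasCompactSupport (FT f) ∧
      (0 : ℝ) ∉ tsupport (FT f) ∧ τ ∉ tsupport (FT f)) ↔
    (∃ g h : ℝ → ℂ, Integrable g ∧ Integrable h ∧
      (f =ᵐ[volume] fun x => ∫ y : ℝ, g (x - y) * h y) ∧
      ContDiff ℝ (⊤ : ℕ∞) (FT g) ∧ HasCompactSupport (FT g) ∧ (0 : ℝ) ∉ tsupport (FT g) ∧
      ContDiff ℝ (⊤ : ℕ∞) (FT h) ∧ HasCompactSupport (FT h) ∧ τ ∉ tsupport (FT h)) := by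
  constructor
  · rintro ⟨hd, hc, h0, hτ'⟩
    obtain ⟨h, hh, hhd, hhc, hhτ, hh1⟩ := exists_FT_cutoff hc.isCompact hτ'
    refine ⟨f, h, hf, hh, ae_eq_of_FT_eq hf (integrable_conv hf hh) ?_,
      hd, hc, h0, hhd, hhc, hhτ⟩
    rw [FT_conv hf hh]
    ext ξ
    by_cases hξ : ξ ∈ tsupport (FT f)
    · simp [hh1 ξ hξ]
    · simp [image_eq_zero_of_notMem_tsupport hξ]
  · rintro ⟨g, h, hg, hh, hfe, hgd, hgc, hg0, hhd, hhc, hhτ⟩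
    rw [FT_congr_ae hfe, FT_conv hg hh]
    exact ⟨hgd.mul hhd, hgc.mul_right, fun H => hg0 (tsupport_mul_subset_left H),
      fun H => hhτ (tsupport_mul_subset_right H)⟩
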